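/- Let G be a profinite group (a compact Hausdorff totally disconnected topological group). Then the intersection over all n ≥ 0 of the topological closures of derivedSeries G n equals the intersection of all open normal subgroups N of G such that the quotient G/N is solvable. In other words, the kernel of the projection of G onto its maximal prosolvable quotient is ⋂_{n ≥ 0} closure(derivedSeries G n). -/

import Mathlib

/-!
A quotient `G ⧸ N` is solvable exactly when `N` contains some term of the derived series. A normal
subgroup `K` has as closure the intersection of the open normal subgroups containing it as soon as
the open normal subgroups `V` form a neighbourhood basis at `1`: each `V ⊔ K` is then open and
normal, and a point of it lies in `V * K`, hence is `V`-close to `K`. Taking for `K` the terms of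
the derived series and intersecting over all of them gives the result.
-/

open Topology

section Solvable

variable {G : Type*} [Group G]

theorem derivedSeries_quotient_eq_bot_iff (N : Subgroup G) [N.Normal] (n : ℕ) :
    derivedSeries (G ⧸ N) n = ⊥ ↔ derivedSeries G n ≤ N := by
  rw [← map_derivedSeries_eq (QuotientGroup.mk'_surjective N) n, Subgroup.map_eq_bot_iff,
    QuotientGroup.ker_mk']

theorem isSolvable_quotient_iff_exists_derivedSeries_le (N : Subgroup G) [N.Normal] :
    Group.IsSolvable (G ⧸ N) ↔ ∃ n : ℕ, derivedSeries G n ≤ N := by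
  simp only [Group.isSolvable_def, derivedSeries_quotient_eq_bot_iff]

end Solvable

section Topology

variable {G : Type*} [Group G] [TopologicalSpace G] [IsTopologicalGroup G]

theorem nhds_one_hasBasis_isOpen_normal [CompactSpace G] [TotallyDisconnectedSpace G] :
    (𝓝 (1 : G)).HasBasis (fun N : Subgroup G ↦ IsOpen (N : Set G) ∧ N.Normal) (↑) := by
  refine Filter.hasBasis_iff.mpr fun U ↦ ⟨fun hU ↦ ?_, ?_⟩
  · obtain ⟨V, hVU, hV, hV_one⟩ := mem_nhds_iff.mp hU
    obtain ⟨N, hNV⟩ := ProfiniteGrp.exist_openNormalSubgroup_sub_open_nhds_of_one hV hV_one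
    exact ⟨N, ⟨N.isOpen', N.isNormal'⟩, hNV.trans hVU⟩
  · rintro ⟨N, ⟨hN_open, -⟩, hNU⟩
    exact Filter.mem_of_superset (hN_open.mem_nhds N.one_mem) hNU

theorem topologicalClosure_eq_sInf_isOpen_normal
    (hG : (𝓝 (1 : G)).HasBasis (fun N : Subgroup G ↦ IsOpen (N : Set G) ∧ N.Normal) (↑))
    (K : Subgroup G) [K.Normal] :
    K.topologicalClosure = sInf {N : Subgroup G | IsOpen (N : Set G) ∧ N.Normal ∧ K ≤ N} := by
  apply le_antisymm
  · exact le_sInf fun N ⟨hN_open, _, hKN⟩ ↦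
      K.topologicalClosure_minimal hKN (N.isClosed_of_isOpen hN_open)
  · intro x hx
    refine mem_closure_iff_nhds_one.mpr fun U hU ↦ ?_
    obtain ⟨V, ⟨hV_open, hV_normal⟩, hVU⟩ := hG.mem_iff.mp hU
    have hx_sup : x ∈ V ⊔ K := Subgroup.mem_sInf.mp hx _
      ⟨Subgroup.isOpen_mono le_sup_left hV_open, Subgroup.sup_normal V K, le_sup_right⟩
    obtain ⟨v, hv, k, hk, rfl⟩ := Subgroup.mem_sup_of_normal_right.mp hx_sup
    have hkx : k / (v * k) ∈ V := by simpa only [div_mul_cancel_right, inv_mem_iff] using hv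
    exact ⟨k, hk, hVU hkx⟩

theorem iInf_closure_derivedSeries_eq_sInf_open_normal_solvable_general
    (hG : (𝓝 (1 : G)).HasBasis (fun N : Subgroup G ↦ IsOpen (N : Set G) ∧ N.Normal) (↑)) :
    (⨅ n : ℕ, (derivedSeries G n).topologicalClosure) =
      sInf {N : Subgroup G | IsOpen (N : Set G) ∧ ∃ _ : N.Normal, Group.IsSolvable (G ⧸ N)} := by
  apply le_antisymm
  · refine le_sInf fun N ⟨hN_open, _, hN_solvable⟩ ↦ ?_
    obtain ⟨n, hn⟩ := (isSolvable_quotient_iff_exists_derivedSeries_le N).mp hN_solvable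
    exact iInf_le_of_le n
      (Subgroup.topologicalClosure_minimal _ hn (N.isClosed_of_isOpen hN_open))
  · refine le_iInf fun n ↦ ?_
    have : (derivedSeries G n).Normal := derivedSeries_normal G n
    rw [topologicalClosure_eq_sInf_isOpen_normal hG]
    exact sInf_le_sInf fun N ⟨hN_open, hN_normal, hle⟩ ↦
      ⟨hN_open, hN_normal, (isSolvable_quotient_iff_exists_derivedSeries_le N).mpr ⟨n, hle⟩⟩

end Topology

/-- In a profinite group `G`, the intersection of the topological closures of the terms of
the derived series equals the intersection of all open normal subgroups with solvable
quotient, i.e. the kernel of the projection onto the maximal prosolvable quotient. -/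
theorem iInf_closure_derivedSeries_eq_sInf_open_normal_solvable
    {G : Type*} [Group G] [TopologicalSpace G] [IsTopologicalGroup G]
    [CompactSpace G] [T2Space G] [TotallyDisconnectedSpace G] :
    (⨅ n : ℕ, (derivedSeries G n).topologicalClosure) =
      sInf {N : Subgroup G | IsOpen (N : Set G) ∧
        ∃ hN : N.Normal, @IsSolvable (G ⧸ N) (@QuotientGroup.Quotient.group G _ N hN)} :=
  iInf_closure_derivedSeries_eq_sInf_open_normal_solvable_general nhds_one_hasBasis_isOpen_normal
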